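/- Let A and B be 8×8 matrices with entries in R, with three-spin tensor components a_{κ,λ,μ} and b_{κ,λ,μ}. Then for each k ∈ {1,2,3}, the first-spin vector component of the product satisfies Tr((σ_k ⊗ σ₀ ⊗ σ₀) AB) = (1/8) Σ_{λ,μ=0}^{3} ( a_{0,λ,μ} b_{k,λ,μ} + a_{k,λ,μ} b_{0,λ,μ} + i ε_{k k₁ k₂} a_{k₁,λ,μ} b_{k₂,λ,μ} ). -/

import Mathlib

open Matrix Kronecker

/-- The Pauli matrices `σ₀ = I₂, σ₁, σ₂, σ₃`, with complex entries regarded as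
elements of an associative unital `ℂ`-algebra `R` via the algebra map. -/
noncomputable def pauli (R : Type*) [Ring R] [Algebra ℂ R] : Fin 4 → Matrix (Fin 2) (Fin 2) R
  | 0 => !![1, 0; 0, 1]
  | 1 => !![0, 1; 1, 0]
  | 2 => !![0, -(algebraMap ℂ R Complex.I); algebraMap ℂ R Complex.I, 0]
  | 3 => !![1, 0; 0, -1]

/-- The Levi-Civita symbol `ε_{ijk}` on indices in `{1,2,3}` (represented by `Fin 3`). -/
def eps (i j k : Fin 3) : ℤ :=
  ((j.val : ℤ) - i.val) * ((k.val : ℤ) - i.val) * ((k.val : ℤ) - j.val) / 2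

/-!
A three-spin matrix over `R` is a one-spin matrix over the algebra of two-spin matrices, and so on,
so its components are obtained by pairing with a Pauli matrix once per spin. Since the coefficient
algebra may be noncommutative, it is enough to know how the pairing `Tr(σ_κ X Y)` of a product
behaves for one spin. Expanding `X = ½ Σ_λ Tr(σ_λ X) σ_λ` gives
`Tr(σ_κ X Y) = ½ Σ_λ Tr(σ_λ X) Tr(σ_κ σ_λ Y)`. For the first spin, `σ_k σ_λ` is expanded by the
multiplication table of the Pauli matrices; for the other two, `κ = 0` and `σ₀ σ_λ = σ_λ`.
-/

section Trace

variable {m n K R : Type*} [Fintype m] [Fintype n] [DecidableEq n] [CommSemiring K] [Semiring R]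
  [Algebra K R]

lemma trace_map_algebraMap_mul (P : Matrix m m K) (X : Matrix m m R) :
    (P.map (algebraMap K R) * X).trace = ∑ i, ∑ j, P i j • X j i := by
  simp [trace, mul_apply, Algebra.smul_def]

lemma trace_map_algebraMap_kronecker_mul (P : Matrix m m K) (Q : Matrix n n R)
    (A : Matrix (m × n) (m × n) R) :
    ((P.map (algebraMap K R) ⊗ₖ Q) * A).trace =
      (Q * (P.map (algebraMap K (Matrix n n R)) * (compRingEquiv m n R).symm A).trace).trace := by
  calc
    _ = ∑ i, ∑ j, P i j • ∑ p, ∑ q, Q p q * A (j, q) (i, p) := by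
      simp only [trace, diag_apply, mul_apply, kroneckerMap_apply, map_apply,
        Fintype.sum_prod_type, ← Algebra.smul_def, smul_mul_assoc, Finset.smul_sum]
      exact Finset.sum_congr rfl fun _ _ => Finset.sum_comm
    _ = ∑ i, ∑ j, P i j • (Q * (compRingEquiv m n R).symm A j i).trace := by
      simp only [trace, diag_apply, mul_apply, compRingEquiv_symm_apply, comp_symm_apply]
    _ = _ := by
      simp only [trace_map_algebraMap_mul, Matrix.mul_sum, trace_sum, mul_smul_comm, trace_smul]

end Trace

section OneSpin

variable {R : Type*} [Ring R] [Algebra ℂ R]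

lemma algebraMap_I_mul_self : algebraMap ℂ R Complex.I * algebraMap ℂ R Complex.I = -1 := by
  rw [← map_mul, Complex.I_mul_I, map_neg, map_one]

lemma pauli_zero : pauli R 0 = 1 := one_fin_two.symm

lemma pauli_eq_map_algebraMap (κ : Fin 4) : pauli R κ = (pauli ℂ κ).map (algebraMap ℂ R) := by
  ext i j
  fin_cases κ <;> fin_cases i <;> fin_cases j <;> simp [pauli]

lemma pauli_succ_mul_pauli_succ (j k : Fin 3) :
    pauli R j.succ * pauli R k.succ =
      (if j = k then 1 else 0) + Complex.I • ∑ l, eps j k l • pauli R l.succ := by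
  have I_smul_I : Complex.I • algebraMap ℂ R Complex.I = -1 := by
    rw [Algebra.smul_def, algebraMap_I_mul_self]
  ext p q
  fin_cases j <;> fin_cases k <;> fin_cases p <;> fin_cases q <;>
    simp [pauli, eps, Fin.sum_univ_three, I_smul_I, ← Algebra.algebraMap_eq_smul_one]

/-- The component `Tr(σ_κ X)` of a one-spin matrix `X`. The coefficients of `X` may themselves be
matrices, in which case this is the partial trace of `σ_κ X` over one spin. -/
noncomputable def pauliTrace (κ : Fin 4) : Matrix (Fin 2) (Fin 2) R →ₗ[ℂ] R :=
  traceLinearMap (Fin 2) ℂ R ∘ₗ LinearMap.mulLeft ℂ (pauli R κ)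

lemma pauliTrace_apply (κ : Fin 4) (X : Matrix (Fin 2) (Fin 2) R) :
    pauliTrace κ X = (pauli R κ * X).trace := rfl

lemma pauliTrace_smul (κ : Fin 4) (r : R) (X : Matrix (Fin 2) (Fin 2) R) :
    pauliTrace κ (r • X) = r * pauliTrace κ X := by
  simp only [pauliTrace_apply, pauli_eq_map_algebraMap (R := R) κ, trace_map_algebraMap_mul,
    Matrix.smul_apply, smul_eq_mul, ← mul_smul_comm, Finset.mul_sum]

lemma eq_sum_pauliTrace_smul_pauli (X : Matrix (Fin 2) (Fin 2) R) :
    X = (1 / 2 : ℂ) • ∑ κ, pauliTrace κ X • pauli R κ := by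
  have mul_I (r : R) : r * algebraMap ℂ R Complex.I = algebraMap ℂ R Complex.I * r :=
    (Algebra.commutes _ _).symm
  ext i j
  fin_cases i <;> fin_cases j <;>
    simp [pauliTrace_apply, pauli, trace_fin_two, Fin.sum_univ_four, mul_apply, mul_I,
      ← mul_assoc, mul_add, algebraMap_I_mul_self] <;>
    module

lemma pauliTrace_mul (κ : Fin 4) (X Y : Matrix (Fin 2) (Fin 2) R) :
    pauliTrace κ (X * Y) =
      (1 / 2 : ℂ) • ∑ μ, pauliTrace μ X * (pauli R κ * pauli R μ * Y).trace := by
  conv_lhs => rw [eq_sum_pauliTrace_smul_pauli X]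
  simp only [smul_mul_assoc, Finset.sum_mul, map_smul, map_sum, pauliTrace_smul]
  simp only [pauliTrace_apply, Matrix.mul_assoc]

lemma pauliTrace_zero_mul (X Y : Matrix (Fin 2) (Fin 2) R) :
    pauliTrace 0 (X * Y) = (1 / 2 : ℂ) • ∑ κ, pauliTrace κ X * pauliTrace κ Y := by
  simp only [pauliTrace_mul, pauli_zero, one_mul, ← pauliTrace_apply]

lemma trace_pauli_succ_mul_pauli_succ_mul (j k : Fin 3) (Y : Matrix (Fin 2) (Fin 2) R) :
    (pauli R j.succ * pauli R k.succ * Y).trace =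
      (if j = k then pauliTrace 0 Y else 0) +
        Complex.I • ∑ l, eps j k l • pauliTrace l.succ Y := by
  simp only [pauli_succ_mul_pauli_succ, pauliTrace_apply, pauli_zero, add_mul, ite_mul, one_mul,
    zero_mul, smul_mul_assoc, Finset.sum_mul, trace_add, trace_smul, trace_sum, apply_ite trace,
    trace_zero]

lemma pauliTrace_succ_mul (k : Fin 3) (X Y : Matrix (Fin 2) (Fin 2) R) :
    pauliTrace k.succ (X * Y) = (1 / 2 : ℂ) •
      (pauliTrace 0 X * pauliTrace k.succ Y + pauliTrace k.succ X * pauliTrace 0 Y +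
        Complex.I • ∑ k₁, ∑ k₂, eps k k₁ k₂ • (pauliTrace k₁.succ X * pauliTrace k₂.succ Y)) := by
  rw [pauliTrace_mul, Fin.sum_univ_succ, pauli_zero, mul_one, ← pauliTrace_apply]
  simp only [trace_pauli_succ_mul_pauli_succ_mul, mul_add, mul_ite, mul_zero,
    Finset.sum_add_distrib, Finset.sum_ite_eq, Finset.mem_univ, if_true, mul_smul_comm,
    Finset.mul_sum, ← Finset.smul_sum, add_assoc]

end OneSpin

section ThreeSpin

/-- A three-spin matrix as a one-spin matrix (the first spin) of one-spin matrices (the second) of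
one-spin matrices (the third). -/
def spinBlocks (R : Type*) [Semiring R] :
    Matrix ((Fin 2 × Fin 2) × Fin 2) ((Fin 2 × Fin 2) × Fin 2) R ≃+*
      Matrix (Fin 2) (Fin 2) (Matrix (Fin 2) (Fin 2) (Matrix (Fin 2) (Fin 2) R)) :=
  (compRingEquiv (Fin 2 × Fin 2) (Fin 2) R).symm.trans
    (compRingEquiv (Fin 2) (Fin 2) (Matrix (Fin 2) (Fin 2) R)).symm

variable {R : Type*} [Ring R] [Algebra ℂ R]

lemma pauli_kronecker_pauli_eq_map_algebraMap (κ μ : Fin 4) :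
    pauli R κ ⊗ₖ pauli R μ = (pauli ℂ κ ⊗ₖ pauli ℂ μ).map (algebraMap ℂ R) := by
  ext
  simp [pauli_eq_map_algebraMap (R := R)]

lemma trace_pauli_kronecker_mul {n : Type*} [Fintype n] [DecidableEq n] (κ : Fin 4)
    (Q : Matrix n n R) (A : Matrix (Fin 2 × n) (Fin 2 × n) R) :
    ((pauli R κ ⊗ₖ Q) * A).trace =
      (Q * pauliTrace κ ((compRingEquiv (Fin 2) n R).symm A)).trace := by
  rw [pauliTrace_apply, pauli_eq_map_algebraMap, trace_map_algebraMap_kronecker_mul,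
    ← pauli_eq_map_algebraMap]

lemma trace_pauli_kronecker_pauli_kronecker_mul {n : Type*} [Fintype n] [DecidableEq n]
    (κ μ : Fin 4) (Q : Matrix n n R)
    (A : Matrix ((Fin 2 × Fin 2) × n) ((Fin 2 × Fin 2) × n) R) :
    ((pauli R κ ⊗ₖ pauli R μ ⊗ₖ Q) * A).trace =
      (Q * pauliTrace μ (pauliTrace κ ((compRingEquiv (Fin 2) (Fin 2) (Matrix n n R)).symm
        ((compRingEquiv (Fin 2 × Fin 2) n R).symm A)))).trace := by
  rw [pauli_kronecker_pauli_eq_map_algebraMap, trace_map_algebraMap_kronecker_mul,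
    ← pauli_kronecker_pauli_eq_map_algebraMap, trace_pauli_kronecker_mul, ← pauliTrace_apply]

lemma trace_pauli_kronecker_pauli_kronecker_pauli_mul (κ μ ν : Fin 4)
    (A : Matrix ((Fin 2 × Fin 2) × Fin 2) ((Fin 2 × Fin 2) × Fin 2) R) :
    ((pauli R κ ⊗ₖ pauli R μ ⊗ₖ pauli R ν) * A).trace =
      pauliTrace ν (pauliTrace μ (pauliTrace κ (spinBlocks R A))) :=
  trace_pauli_kronecker_pauli_kronecker_mul κ μ (pauli R ν) A

lemma pauliTrace_zero_pauliTrace_zero_mul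
    (U V : Matrix (Fin 2) (Fin 2) (Matrix (Fin 2) (Fin 2) R)) :
    pauliTrace 0 (pauliTrace 0 (U * V)) = (1 / 4 : ℂ) •
      ∑ μ, ∑ ν, pauliTrace ν (pauliTrace μ U) * pauliTrace ν (pauliTrace μ V) := by
  simp only [pauliTrace_zero_mul, map_smul, map_sum, ← Finset.smul_sum, smul_smul]
  norm_num

end ThreeSpin

/-- First-spin vector component of the product of two 8×8 matrices over a `ℂ`-algebra:
`Tr((σ_k ⊗ σ₀ ⊗ σ₀) AB) = (1/8) Σ_{λ,μ} (a_{0,λ,μ} b_{k,λ,μ} + a_{k,λ,μ} b_{0,λ,μ}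
  + i ε_{k k₁ k₂} a_{k₁,λ,μ} b_{k₂,λ,μ})`. -/
theorem three_spin_product_first_vector (R : Type*) [Ring R] [Algebra ℂ R]
    (A B : Matrix ((Fin 2 × Fin 2) × Fin 2) ((Fin 2 × Fin 2) × Fin 2) R)
    (a b : Fin 4 → Fin 4 → Fin 4 → R)
    (ha : ∀ κ μ ν : Fin 4,
      a κ μ ν = ((pauli R κ ⊗ₖ pauli R μ ⊗ₖ pauli R ν) * A).trace)
    (hb : ∀ κ μ ν : Fin 4,
      b κ μ ν = ((pauli R κ ⊗ₖ pauli R μ ⊗ₖ pauli R ν) * B).trace) :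
    ∀ k : Fin 3,
      ((pauli R k.succ ⊗ₖ pauli R 0 ⊗ₖ pauli R 0) * (A * B)).trace =
        (1/8 : ℂ) •
          ∑ μ : Fin 4, ∑ ν : Fin 4,
            (a 0 μ ν * b k.succ μ ν + a k.succ μ ν * b 0 μ ν
              + algebraMap ℂ R Complex.I *
                  ∑ k₁ : Fin 3, ∑ k₂ : Fin 3,
                    ((eps k k₁ k₂ : ℤ) : R) * (a k₁.succ μ ν * b k₂.succ μ ν)) := by
  intro k
  have sum_swap (F : Fin 3 → Fin 3 → Fin 4 → Fin 4 → R) :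
      ∑ μ, ∑ ν, ∑ k₁, ∑ k₂, F k₁ k₂ μ ν = ∑ k₁, ∑ k₂, ∑ μ, ∑ ν, F k₁ k₂ μ ν := by
    rw [Finset.sum_comm_cycle]
    exact Finset.sum_congr rfl fun _ _ => Finset.sum_comm_cycle
  rw [trace_pauli_kronecker_pauli_kronecker_pauli_mul, map_mul, pauliTrace_succ_mul]
  simp only [map_smul, map_add, map_sum, map_zsmul, pauliTrace_zero_pauliTrace_zero_mul,
    ← trace_pauli_kronecker_pauli_kronecker_pauli_mul, ← ha, ← hb]
  simp only [← zsmul_eq_mul, ← Algebra.smul_def, Finset.sum_add_distrib, ← Finset.smul_sum,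
    sum_swap, smul_comm (_ : ℤ) (1 / 4 : ℂ)]
  module
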